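/- Let CS be a constant specification and Γ ⊆ Form^Ag. Then the following are equivalent: (i) Γ is CS-consistent; (ii) Γ is satisfiable in Mod_CS(𝓒^Ag_mixsucc), the class of CS-normal jstit models based on mixed successor stit frames for Ag; (iii) Γ is satisfiable in Mod↓_CS(𝓒^Ag_mixsucc), the subclass of unirelational such models. -/

import Mathlib

/-! Preliminaries: temporal frames, stit frames, jstit frames, the language of
JA-STIT, jstit models, satisfaction, and the Hilbert system Σ_D(CS). -/

/-- A temporal frame: a nonempty set of moments with a partial order satisfying
historical connection and no backward branching. -/
structure TemporalFrame (Mo : Type) : Type where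
  le : Mo → Mo → Prop
  le_refl : ∀ m, le m m
  le_antisymm : ∀ {m m'}, le m m' → le m' m → m = m'
  le_trans : ∀ {m1 m2 m3}, le m1 m2 → le m2 m3 → le m1 m3
  nonempty : Nonempty Mo
  hist_conn : ∀ m m1, ∃ m2, le m2 m ∧ le m2 m1
  no_backward : ∀ m m1 m2, le m1 m → le m2 m → le m1 m2 ∨ le m2 m1

namespace TemporalFrame

variable {Mo : Type} (T : TemporalFrame Mo)

/-- The strict companion of the temporal order. -/
def lt (m m' : Mo) : Prop := T.le m m' ∧ m ≠ m'

/-- A history is a maximal chain of moments w.r.t. the temporal order. -/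
def IsHistory (h : Set Mo) : Prop :=
  IsChain T.le h ∧ ∀ h' : Set Mo, IsChain T.le h' → h ⊆ h' → h' = h

/-- `T.H m` is the set of histories passing through the moment `m`. -/
def H (m : Mo) : Set (Set Mo) := { h | T.IsHistory h ∧ m ∈ h }

/-- Histories `h` and `g` are undivided at `m`. -/
def Undiv (m : Mo) (h g : Set Mo) : Prop := ∃ m', T.lt m m' ∧ m' ∈ h ∧ m' ∈ g

/-- `m'` is an immediate successor of `m`. -/
def Next (m m' : Mo) : Prop := T.lt m m' ∧ ∀ m'', T.lt m'' m' → T.le m'' m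

/-- Mixed successor condition on (the temporal part of) a frame. -/
def MixSucc : Prop :=
  ∀ m m1 : Mo,
    (T.lt m m1 → ∃ m2, T.le m2 m1 ∧ T.Next m m2) ∨
    (∀ h ∈ T.H m, ∀ g ∈ T.H m, T.Undiv m h g)

end TemporalFrame

/-- A stit frame for an agent community `Ag`: a temporal frame together with a choice
function assigning to each moment and agent a partition of the histories through that
moment, subject to no choice between undivided histories and independence of agents. -/
structure StitFrame (Mo : Type) (Ag : Type) extends TemporalFrame Mo where
  choice : Mo → Ag → Set (Set (Set Mo))
  choice_cell_nonempty : ∀ m j C, C ∈ choice m j → C.Nonempty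
  choice_cell_sub : ∀ m j C, C ∈ choice m j → C ⊆ toTemporalFrame.H m
  choice_cover : ∀ m j h, h ∈ toTemporalFrame.H m → ∃ C ∈ choice m j, h ∈ C
  choice_disjoint : ∀ m j C C', C ∈ choice m j → C' ∈ choice m j →
    (C ∩ C').Nonempty → C = C'
  no_choice_undiv : ∀ m j h h', h ∈ toTemporalFrame.H m → h' ∈ toTemporalFrame.H m →
    toTemporalFrame.Undiv m h h' → ∀ C ∈ choice m j, h ∈ C → h' ∈ C
  independence : ∀ m (f : Ag → Set (Set Mo)), (∀ j, f j ∈ choice m j) →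
    (⋂ j, f j).Nonempty

/-- A justification stit (jstit) frame for `Ag`: a stit frame together with two
epistemic preorders `R ⊆ R_e`, with the temporal order included in `R`. -/
structure JstitFrame (Mo : Type) (Ag : Type) extends StitFrame Mo Ag where
  R : Mo → Mo → Prop
  Re : Mo → Mo → Prop
  R_refl : ∀ m, R m m
  R_trans : ∀ {m1 m2 m3}, R m1 m2 → R m2 m3 → R m1 m3
  Re_refl : ∀ m, Re m m
  Re_trans : ∀ {m1 m2 m3}, Re m1 m2 → Re m2 m3 → Re m1 m3
  R_sub_Re : ∀ {m m'}, R m m' → Re m m'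
  le_sub_R : ∀ {m m'}, le m m' → R m m'

namespace JstitFrame

variable {Mo : Type} {Ag : Type} (F : JstitFrame Mo Ag)

/-- The family `Θ_m` of subsets of the set of moments associated with a moment `m`. -/
def Theta (m : Mo) : Set (Set Mo) :=
  { S | m ∈ S ∧
    (∀ m1 m2, m1 ∈ S → F.Re m1 m2 → m2 ∈ S) ∧
    (∀ m1, (∀ h ∈ F.toTemporalFrame.H m1,
        ∃ m2 ∈ h, F.toTemporalFrame.Next m1 m2 ∧ m2 ∈ S) → m1 ∈ S) ∧
    (∀ m1, m1 ∈ S →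
      (∀ m2, F.toTemporalFrame.lt m2 m1 →
        ∃ m3, F.toTemporalFrame.lt m2 m3 ∧ F.toTemporalFrame.lt m3 m1) →
      ∃ m4, F.toTemporalFrame.lt m4 m1 ∧ m4 ∈ S) }

/-- A jstit frame is unirelational iff `R_e ⊆ R`. -/
def Unirelational : Prop := ∀ m m', F.Re m m' → F.R m m'

/-- Regularity of a jstit frame. -/
def Regular : Prop :=
  ∀ m m1 : Mo, F.toTemporalFrame.lt m m1 →
    (∃ S : Set Mo,
      (∀ m0, F.toTemporalFrame.lt m m0 → F.le m0 m1 → S ∈ F.Theta m0) ∧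
      m ∉ S ∧
      ∃ h' ∈ F.toTemporalFrame.H m,
        (∀ g ∈ F.toTemporalFrame.H m1, ¬ F.toTemporalFrame.Undiv m h' g) ∧
        (∀ m' ∈ h', F.toTemporalFrame.Next m m' → m' ∉ S)) →
    ∃ m2, F.le m2 m1 ∧ F.toTemporalFrame.Next m m2

end JstitFrame

/-- Proof polynomials over proof variables `PVar` and proof constants `PConst`. -/
inductive Pol (PVar PConst : Type) : Type
  | var : PVar → Pol PVar PConst
  | const : PConst → Pol PVar PConst
  | plus : Pol PVar PConst → Pol PVar PConst → Pol PVar PConst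
  | times : Pol PVar PConst → Pol PVar PConst → Pol PVar PConst
  | bang : Pol PVar PConst → Pol PVar PConst

/-- Formulas of JA-STIT. -/
inductive Form (Ag PVar PConst PropVar : Type) : Type
  | pv : PropVar → Form Ag PVar PConst PropVar
  | and : Form Ag PVar PConst PropVar → Form Ag PVar PConst PropVar →
      Form Ag PVar PConst PropVar
  | neg : Form Ag PVar PConst PropVar → Form Ag PVar PConst PropVar
  | stit : Ag → Form Ag PVar PConst PropVar → Form Ag PVar PConst PropVar
  | box : Form Ag PVar PConst PropVar → Form Ag PVar PConst PropVar
  | proves : Pol PVar PConst → Form Ag PVar PConst PropVar → Form Ag PVar PConst PropVar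
  | know : Form Ag PVar PConst PropVar → Form Ag PVar PConst PropVar
  | ann : Pol PVar PConst → Form Ag PVar PConst PropVar

namespace Form

variable {Ag PVar PConst PropVar : Type}

/-- Implication, defined as usual from `¬` and `∧`. -/
def imp (A B : Form Ag PVar PConst PropVar) : Form Ag PVar PConst PropVar :=
  neg (and A (neg B))

/-- Disjunction, defined as usual. -/
def or (A B : Form Ag PVar PConst PropVar) : Form Ag PVar PConst PropVar :=
  neg (and (neg A) (neg B))

/-- The dual `◇` of the historical necessity modality. -/
def dia (A : Form Ag PVar PConst PropVar) : Form Ag PVar PConst PropVar :=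
  neg (box (neg A))

/-- Falsum, defined as usual. -/
def bot [Inhabited PropVar] : Form Ag PVar PConst PropVar :=
  and (pv default) (neg (pv default))

end Form

/-- Conjunction of a nonempty list of formulas (head plus tail). -/
def andList {Ag PVar PConst PropVar : Type} :
    Form Ag PVar PConst PropVar → List (Form Ag PVar PConst PropVar) →
      Form Ag PVar PConst PropVar
  | A, [] => A
  | A, B :: L => Form.and A (andList B L)

/-- Disjunction of a list of formulas. -/
def bigOr {Ag PVar PConst PropVar : Type} [Inhabited PropVar] :
    List (Form Ag PVar PConst PropVar) → Form Ag PVar PConst PropVar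
  | [] => Form.bot
  | [A] => A
  | A :: B :: L => Form.or A (bigOr (B :: L))

/-- A classical propositional tautology: a formula true under every Boolean valuation
commuting with `∧` and `¬` (all other formulas being treated as atoms). -/
def Tautology {Ag PVar PConst PropVar : Type} (A : Form Ag PVar PConst PropVar) : Prop :=
  ∀ v : Form Ag PVar PConst PropVar → Bool,
    (∀ B C, v (Form.and B C) = (v B && v C)) →
    (∀ B, v (Form.neg B) = !v B) →
    v A = true

/-- The axiom schemes (A0)–(A9) of Σ_D. -/
inductive Ax {Ag PVar PConst PropVar : Type} : Form Ag PVar PConst PropVar → Prop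
  -- (A0) classical propositional tautologies
  | a0 {A} : Tautology A → Ax A
  -- (A1) S5 axioms for □
  | boxK {A B} : Ax (Form.imp (Form.box (Form.imp A B))
      (Form.imp (Form.box A) (Form.box B)))
  | boxT {A} : Ax (Form.imp (Form.box A) A)
  | box4 {A} : Ax (Form.imp (Form.box A) (Form.box (Form.box A)))
  | box5 {A} : Ax (Form.imp (Form.neg (Form.box A)) (Form.box (Form.neg (Form.box A))))
  -- (A1) S5 axioms for each [j]
  | stitK {j : Ag} {A B} : Ax (Form.imp (Form.stit j (Form.imp A B))
      (Form.imp (Form.stit j A) (Form.stit j B)))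
  | stitT {j : Ag} {A} : Ax (Form.imp (Form.stit j A) A)
  | stit4 {j : Ag} {A} : Ax (Form.imp (Form.stit j A) (Form.stit j (Form.stit j A)))
  | stit5 {j : Ag} {A} : Ax (Form.imp (Form.neg (Form.stit j A))
      (Form.stit j (Form.neg (Form.stit j A))))
  -- (A2)
  | a2 {j : Ag} {A} : Ax (Form.imp (Form.box A) (Form.stit j A))
  -- (A3), for pairwise distinct agents
  | a3 {p : Ag × Form Ag PVar PConst PropVar} {L : List (Ag × Form Ag PVar PConst PropVar)} :
      (((p :: L).map Prod.fst).Nodup) →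
      Ax (Form.imp
        (andList (Form.dia (Form.stit p.1 p.2)) (L.map fun q => Form.dia (Form.stit q.1 q.2)))
        (Form.dia (andList (Form.stit p.1 p.2) (L.map fun q => Form.stit q.1 q.2))))
  -- (A4)
  | a4 {s t : Pol PVar PConst} {A B} : Ax (Form.imp (Form.proves s (Form.imp A B))
      (Form.imp (Form.proves t A) (Form.proves (Pol.times s t) B)))
  -- (A5)
  | a5 {t : Pol PVar PConst} {A} : Ax (Form.imp (Form.proves t A)
      (Form.and (Form.proves (Pol.bang t) (Form.proves t A)) (Form.know A)))
  -- (A6)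
  | a6 {s t : Pol PVar PConst} {A} : Ax (Form.imp
      (Form.or (Form.proves s A) (Form.proves t A)) (Form.proves (Pol.plus s t) A))
  -- (A7) S4 axioms for K
  | knowK {A B} : Ax (Form.imp (Form.know (Form.imp A B))
      (Form.imp (Form.know A) (Form.know B)))
  | knowT {A} : Ax (Form.imp (Form.know A) A)
  | know4 {A} : Ax (Form.imp (Form.know A) (Form.know (Form.know A)))
  -- (A8)
  | a8 {A} : Ax (Form.imp (Form.know A) (Form.box (Form.know (Form.box A))))
  -- (A9)
  | a9 {t : Pol PVar PConst} : Ax (Form.imp (Form.box (Form.ann t))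
      (Form.know (Form.box (Form.ann t))))

/-- Iterated prefixes `c_n : … : c_1 : A` of instances `A` of the axiom schemes. -/
inductive ConstIter {Ag PVar PConst PropVar : Type} : Form Ag PVar PConst PropVar → Prop
  | base {c : PConst} {A} : Ax A → ConstIter (Form.proves (Pol.const c) A)
  | step {c : PConst} {B} : ConstIter B → ConstIter (Form.proves (Pol.const c) B)

/-- A constant specification: a set of formulas of the form `c_n : … : c_1 : A` with `A`
an instance of (A0)–(A9), closed under deleting the outermost constant. -/
def IsConstSpec {Ag PVar PConst PropVar : Type}
    (CS : Set (Form Ag PVar PConst PropVar)) : Prop :=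
  (∀ B ∈ CS, ConstIter B) ∧
  ∀ (c c' : PConst) (B : Form Ag PVar PConst PropVar),
    Form.proves (Pol.const c) (Form.proves (Pol.const c') B) ∈ CS →
    Form.proves (Pol.const c') B ∈ CS

/-- Provability in Σ_D(CS): axioms (A0)–(A9), modus ponens (R1), K-necessitation (R2),
the rule (R_D) and the rule (R_CS). -/
inductive Proves {Ag PVar PConst PropVar : Type} [Inhabited PropVar]
    (CS : Set (Form Ag PVar PConst PropVar)) : Form Ag PVar PConst PropVar → Prop
  | ax {A} : Ax A → Proves CS A
  | mp {A B} : Proves CS (Form.imp A B) → Proves CS A → Proves CS B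
  | nec {A} : Proves CS A → Proves CS (Form.know A)
  | rd {A : Form Ag PVar PConst PropVar} {ts ss : List (Pol PVar PConst)}
      (hne : ts ++ ss ≠ []) :
      Proves CS (Form.imp (Form.know A)
        (bigOr ((ts.map fun t => Form.neg (Form.box (Form.ann t))) ++
                (ss.map fun s => Form.box (Form.ann s))))) →
      Proves CS (Form.imp (Form.know A)
        (bigOr ((ts.map fun t => Form.neg (Form.ann t)) ++
                (ss.map fun s => Form.ann s))))
  | rcs {B} : B ∈ CS → Proves CS B

/-- Γ is consistent in Σ_D(CS): no finite nonempty conjunction of members of Γ provably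
implies falsum. -/
def CSConsistent {Ag PVar PConst PropVar : Type} [Inhabited PropVar]
    (CS Γ : Set (Form Ag PVar PConst PropVar)) : Prop :=
  ¬ ∃ (A : Form Ag PVar PConst PropVar) (L : List (Form Ag PVar PConst PropVar)),
      A ∈ Γ ∧ (∀ B ∈ L, B ∈ Γ) ∧ Proves CS (Form.imp (andList A L) Form.bot)

/-- A jstit model for `Ag`: a jstit frame together with `Act`, an admissible evidence
function `E` and an evaluation `V`, subject to the semantical constraints. -/
structure JstitModel (Mo : Type) (Ag PVar PConst PropVar : Type)
    extends JstitFrame Mo Ag where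
  act : Mo → Set Mo → Set (Pol PVar PConst)
  ev : Mo → Pol PVar PConst → Set (Form Ag PVar PConst PropVar)
  val : PropVar → Set (Mo × Set Mo)
  -- monotonicity of evidence
  ev_mono : ∀ m m' t, Re m m' → ev m t ⊆ ev m' t
  -- evidence closure properties
  ev_app : ∀ m s t A B, Form.imp A B ∈ ev m s → A ∈ ev m t → B ∈ ev m (Pol.times s t)
  ev_sum_left : ∀ m s t, ev m s ⊆ ev m (Pol.plus s t)
  ev_sum_right : ∀ m s t, ev m t ⊆ ev m (Pol.plus s t)
  ev_bang : ∀ m t A, A ∈ ev m t → Form.proves t A ∈ ev m (Pol.bang t)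
  -- expansion of presented proofs
  expansion : ∀ m m' h, toTemporalFrame.lt m' m → h ∈ toTemporalFrame.H m →
    act m' h ⊆ act m h
  -- no new proofs guaranteed
  no_new : ∀ m t, (∀ h ∈ toTemporalFrame.H m, t ∈ act m h) →
    ∃ m' h, toTemporalFrame.lt m' m ∧ h ∈ toTemporalFrame.H m ∧ t ∈ act m' h
  -- presenting a new proof makes histories divide
  divide : ∀ m h h', h ∈ toTemporalFrame.H m → h' ∈ toTemporalFrame.H m →
    toTemporalFrame.Undiv m h h' → act m h = act m h'
  -- presented proofs are epistemically transparent
  transparent : ∀ m m' t, Re m m' → (∀ h ∈ toTemporalFrame.H m, t ∈ act m h) →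
    ∀ h' ∈ toTemporalFrame.H m', t ∈ act m' h'

namespace JstitModel

variable {Mo Ag PVar PConst PropVar : Type}

/-- `Act_m`, the set of proofs presented at `m` under every history through `m`. -/
def ActM (M : JstitModel Mo Ag PVar PConst PropVar) (m : Mo) : Set (Pol PVar PConst) :=
  { t | ∀ h ∈ M.toTemporalFrame.H m, t ∈ M.act m h }

/-- The satisfaction relation for jstit models. -/
def Sat (M : JstitModel Mo Ag PVar PConst PropVar) :
    Form Ag PVar PConst PropVar → Mo → Set Mo → Prop
  | Form.pv p, m, h => (m, h) ∈ M.val p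
  | Form.and A B, m, h => M.Sat A m h ∧ M.Sat B m h
  | Form.neg A, m, h => ¬ M.Sat A m h
  | Form.stit j A, m, h => ∀ h' C, C ∈ M.choice m j → h ∈ C → h' ∈ C → M.Sat A m h'
  | Form.box A, m, _ => ∀ h' ∈ M.toTemporalFrame.H m, M.Sat A m h'
  | Form.know A, m, _ => ∀ m' h', M.R m m' → h' ∈ M.toTemporalFrame.H m' → M.Sat A m' h'
  | Form.proves t A, m, _ => A ∈ M.ev m t ∧
      ∀ m' h', M.Re m m' → h' ∈ M.toTemporalFrame.H m' → M.Sat A m' h'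
  | Form.ann t, m, h => t ∈ M.act m h

/-- Validity of a formula in a jstit model. -/
def Valid (M : JstitModel Mo Ag PVar PConst PropVar)
    (A : Form Ag PVar PConst PropVar) : Prop :=
  ∀ m h, h ∈ M.toTemporalFrame.H m → M.Sat A m h

end JstitModel

/-- CS-normality of a jstit model. -/
def CSNormal {Mo Ag PVar PConst PropVar : Type}
    (CS : Set (Form Ag PVar PConst PropVar))
    (M : JstitModel Mo Ag PVar PConst PropVar) : Prop :=
  ∀ (c : PConst) (m : Mo) (A : Form Ag PVar PConst PropVar),
    Form.proves (Pol.const c) A ∈ CS → A ∈ M.ev m (Pol.const c)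

/-!
For soundness of (R_D) on mixed successor frames, the proofs presented at `(m, h)` are exactly those
presented at `m'` under every history, where `m'` is the next moment after `m` on `h`, or `m` itself
if `h` is not divided from any other history at `m`.

For completeness, the canonical model lives on the tree of finite sequences of maximal consistent
sets. A nonempty sequence carries a `□`-class of such sets, and a history through it selects a
member `X` of the class. (R_D) provides a set `K`-accessible from `X` that contains `□Et` exactly
if `Et ∈ X`; its class is attached to the next moment, so that the new proofs of a moment are the
ones presented on the way to it. Independence of agents follows from (A3) by compactness. The root
carries no proof presented under every history, because its continuations are unrestricted and some
maximal consistent set contains no `□Et`: the theory of a model in which no proof is ever presented.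
-/

/-! ### Frames, choice and soundness -/

namespace TemporalFrame

variable {Mo : Type} {T : TemporalFrame Mo} {h g : Set Mo} {m m' : Mo}

theorem IsHistory.le_or_le (hh : T.IsHistory h) (hm : m ∈ h) (hm' : m' ∈ h) :
    T.le m m' ∨ T.le m' m :=
  have : Std.Refl T.le := ⟨T.le_refl⟩
  hh.1.total hm hm'

theorem IsHistory.mem_of_forall_le_or_le (hh : T.IsHistory h)
    (hm : ∀ m' ∈ h, T.le m m' ∨ T.le m' m) : m ∈ h := by
  have hc : IsChain T.le (insert m h) := hh.1.insert fun m' hm' _ => hm m' hm'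
  rw [← hh.2 _ hc (Set.subset_insert m h)]
  exact Set.mem_insert m h

theorem IsHistory.mem_of_le (hh : T.IsHistory h) (hm' : m' ∈ h) (hle : T.le m m') : m ∈ h := by
  refine hh.mem_of_forall_le_or_le fun b hb => ?_
  rcases hh.le_or_le hm' hb with hb' | hb'
  · exact .inl (T.le_trans hle hb')
  · exact T.no_backward m' m b hle hb'

theorem H_anti (hle : T.le m m') : T.H m' ⊆ T.H m :=
  fun _ hh => ⟨hh.1, hh.1.mem_of_le hh.2 hle⟩

theorem exists_isHistory_superset {c : Set Mo} (hc : IsChain T.le c) :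
    ∃ h, T.IsHistory h ∧ c ⊆ h := by
  obtain ⟨h, hh, hch⟩ := hc.exists_maxChain
  exact ⟨h, ⟨hh.1, fun _ hg hsub => (hh.2 hg hsub).symm⟩, hch⟩

theorem nonempty_H (m : Mo) : (T.H m).Nonempty := by
  obtain ⟨h, hh, hm⟩ := exists_isHistory_superset (IsChain.singleton (r := T.le) (a := m))
  exact ⟨h, hh, hm rfl⟩

theorem eq_of_mem_H_of_forall_not_lt (hh : h ∈ T.H m) (hmax : ∀ m' ∈ h, ¬ T.lt m m')
    (hg : g ∈ T.H m) : g = h := by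
  refine hh.1.2 g hg.1.1 fun x hx => ?_
  rcases hh.1.le_or_le hx hh.2 with hle | hle
  · exact hg.1.mem_of_le hg.2 hle
  · rcases eq_or_ne m x with rfl | hne
    · exact hg.2
    · exact absurd ⟨hle, hne⟩ (hmax x hx)

end TemporalFrame

namespace StitFrame

variable {Mo Ag : Type} {m : Mo} {j : Ag} {h g k : Set Mo}

/-- `S.ChoiceEquiv m j h g` says that `h` and `g` lie in the same cell of the partition
`Choice^m_j`, i.e. that `g ∈ Choice^m_j(h)`. -/
def ChoiceEquiv (S : StitFrame Mo Ag) (m : Mo) (j : Ag) (h g : Set Mo) : Prop :=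
  ∃ C ∈ S.choice m j, h ∈ C ∧ g ∈ C

variable {S : StitFrame Mo Ag}

theorem ChoiceEquiv.refl (hh : h ∈ S.H m) : S.ChoiceEquiv m j h h := by
  obtain ⟨C, hC, hhC⟩ := S.choice_cover m j h hh
  exact ⟨C, hC, hhC, hhC⟩

theorem ChoiceEquiv.symm : S.ChoiceEquiv m j h g → S.ChoiceEquiv m j g h := by
  rintro ⟨C, hC, hh, hg⟩
  exact ⟨C, hC, hg, hh⟩

theorem ChoiceEquiv.trans :
    S.ChoiceEquiv m j h g → S.ChoiceEquiv m j g k → S.ChoiceEquiv m j h k := by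
  rintro ⟨C, hC, hh, hg⟩ ⟨D, hD, hg', hk⟩
  obtain rfl := S.choice_disjoint m j C D hC hD ⟨g, hg, hg'⟩
  exact ⟨C, hC, hh, hk⟩

theorem ChoiceEquiv.mem_H : S.ChoiceEquiv m j h g → g ∈ S.H m := by
  rintro ⟨C, hC, -, hg⟩
  exact S.choice_cell_sub m j C hC hg

theorem exists_forall_choiceEquiv (S : StitFrame Mo Ag) {f : Ag → Set Mo}
    (hf : ∀ j, f j ∈ S.H m) : ∃ g, ∀ j, S.ChoiceEquiv m j (f j) g := by
  choose C hC hfC using fun j => S.choice_cover m j (f j) (hf j)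
  obtain ⟨g, hg⟩ := S.independence m C hC
  exact ⟨g, fun j => ⟨C j, hC j, hfC j, Set.mem_iInter.1 hg j⟩⟩

/-- The stit frame over `T` in which the choice cells of agent `j` at `m` are the classes of
the equivalence relation `r m j` on the histories through `m`. -/
def ofEquivalence (T : TemporalFrame Mo) (r : Mo → Ag → Set Mo → Set Mo → Prop)
    (hr : ∀ m j, Equivalence (r m j))
    (undiv : ∀ m j, ∀ h ∈ T.H m, ∀ g ∈ T.H m, T.Undiv m h g → r m j h g)
    (indep : ∀ m (f : Ag → Set Mo), (∀ j, f j ∈ T.H m) →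
      ∃ g ∈ T.H m, ∀ j, r m j (f j) g) : StitFrame Mo Ag where
  toTemporalFrame := T
  choice m j := {C | ∃ h ∈ T.H m, C = {g ∈ T.H m | r m j h g}}
  choice_cell_nonempty := by
    rintro m j _ ⟨h, hh, rfl⟩
    exact ⟨h, hh, (hr m j).refl h⟩
  choice_cell_sub := by
    rintro m j _ ⟨h, -, rfl⟩ g hg
    exact hg.1
  choice_cover m j h hh := ⟨_, ⟨h, hh, rfl⟩, hh, (hr m j).refl h⟩
  choice_disjoint := by
    rintro m j _ _ ⟨h, -, rfl⟩ ⟨g, -, rfl⟩ ⟨k, hhk, hgk⟩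
    have hhg : r m j h g := (hr m j).trans hhk.2 ((hr m j).symm hgk.2)
    ext k
    exact and_congr_right fun _ =>
      ⟨(hr m j).trans ((hr m j).symm hhg), (hr m j).trans hhg⟩
  no_choice_undiv := by
    rintro m j h g hh hg hu _ ⟨k, -, rfl⟩ hkh
    exact ⟨hg, (hr m j).trans hkh.2 (undiv m j h hh g hg hu)⟩
  independence := by
    intro m C hC
    choose f hf hCf using hC
    obtain ⟨g, hg, hfg⟩ := indep m f hf
    refine ⟨g, Set.mem_iInter.2 fun j => ?_⟩
    rw [hCf j]
    exact ⟨hg, hfg j⟩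

theorem choiceEquiv_ofEquivalence {T : TemporalFrame Mo}
    {r : Mo → Ag → Set Mo → Set Mo → Prop} {hr undiv indep} (hh : h ∈ T.H m) :
    (ofEquivalence T r hr undiv indep).ChoiceEquiv m j h g ↔ g ∈ T.H m ∧ r m j h g := by
  constructor
  · rintro ⟨_, ⟨k, -, rfl⟩, hkh, hkg⟩
    exact ⟨hkg.1, (hr m j).trans ((hr m j).symm hkh.2) hkg.2⟩
  · exact fun hg => ⟨_, ⟨h, hh, rfl⟩, ⟨hh, (hr m j).refl h⟩, hg⟩

end StitFrame

namespace JstitModel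

variable {Mo Ag PVar PConst PropVar : Type} {M : JstitModel Mo Ag PVar PConst PropVar}
  {A B : Form Ag PVar PConst PropVar} {m m' : Mo} {h g : Set Mo} {j : Ag}
  {t : Pol PVar PConst}

theorem sat_imp : M.Sat (Form.imp A B) m h ↔ (M.Sat A m h → M.Sat B m h) := by
  simp [Form.imp, Sat]

theorem sat_or : M.Sat (Form.or A B) m h ↔ M.Sat A m h ∨ M.Sat B m h := by
  simp only [Form.or, Sat]
  tauto

theorem sat_dia : M.Sat (Form.dia A) m h ↔ ∃ g ∈ M.H m, M.Sat A m g := by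
  simp [Form.dia, Sat]

theorem sat_stit : M.Sat (Form.stit j A) m h ↔ ∀ g, M.ChoiceEquiv m j h g → M.Sat A m g :=
  ⟨fun hs g ⟨C, hC, hh, hg⟩ => hs g C hC hh hg, fun hs g C hC hh hg => hs g ⟨C, hC, hh, hg⟩⟩

theorem sat_stit_congr (hhg : M.ChoiceEquiv m j h g) :
    M.Sat (Form.stit j A) m h ↔ M.Sat (Form.stit j A) m g := by
  simp only [sat_stit]
  exact ⟨fun hs k hk => hs k (hhg.trans hk), fun hs k hk => hs k (hhg.symm.trans hk)⟩

theorem sat_andList {L : List (Form Ag PVar PConst PropVar)} :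
    M.Sat (andList A L) m h ↔ ∀ B ∈ A :: L, M.Sat B m h := by
  induction L generalizing A with
  | nil => simp [andList]
  | cons B L ih => simp [andList, Sat, ih]

theorem not_sat_bot [Inhabited PropVar] :
    ¬ M.Sat (Form.bot : Form Ag PVar PConst PropVar) m h := by
  simp [Form.bot, Sat]

theorem sat_bigOr [Inhabited PropVar] {L : List (Form Ag PVar PConst PropVar)} :
    M.Sat (bigOr L) m h ↔ ∃ B ∈ L, M.Sat B m h := by
  induction L with
  | nil => simp [bigOr, not_sat_bot]
  | cons B L ih =>
    cases L with
    | nil => simp [bigOr]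
    | cons C L => simp [bigOr, sat_or, ih]

theorem sat_bigOr_literals [Inhabited PropVar] {ι : Type} {ts ss : List ι}
    {f : ι → Form Ag PVar PConst PropVar} :
    M.Sat (bigOr ((ts.map fun t => Form.neg (f t)) ++ ss.map f)) m h ↔
      (∃ t ∈ ts, ¬ M.Sat (f t) m h) ∨ ∃ s ∈ ss, M.Sat (f s) m h := by
  simp only [sat_bigOr, List.mem_append, List.mem_map, or_and_right, exists_or]
  simp [Sat]

theorem Valid.of_tautology (hA : Tautology A) : M.Valid A := by
  classical
  intro m h _
  refine of_decide_eq_true <| hA (fun B => decide (M.Sat B m h)) (fun B C => ?_) fun B => ?_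
  · rw [Bool.eq_iff_iff, Bool.and_eq_true, decide_eq_true_iff, decide_eq_true_iff,
      decide_eq_true_iff, Sat]
  · rw [Bool.eq_iff_iff, Bool.not_eq_true', decide_eq_true_iff, decide_eq_false_iff_not, Sat]

theorem exists_forall_sat_stit {p : Ag × Form Ag PVar PConst PropVar}
    {L : List (Ag × Form Ag PVar PConst PropVar)} (hnd : ((p :: L).map Prod.fst).Nodup)
    (hL : ∀ q ∈ p :: L, ∃ k ∈ M.H m, M.Sat (Form.stit q.1 q.2) m k) :
    ∃ g ∈ M.H m, ∀ q ∈ p :: L, M.Sat (Form.stit q.1 q.2) m g := by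
  have hwitness : ∀ j, ∃ k ∈ M.H m, ∀ q ∈ p :: L, q.1 = j → M.Sat (Form.stit q.1 q.2) m k := by
    intro j
    by_cases hj : ∃ q ∈ p :: L, q.1 = j
    · obtain ⟨q, hq, rfl⟩ := hj
      obtain ⟨k, hk, hs⟩ := hL q hq
      refine ⟨k, hk, fun q' hq' heq => ?_⟩
      obtain rfl := List.inj_on_of_nodup_map hnd hq' hq heq
      exact hs
    · obtain ⟨k, hk⟩ := M.nonempty_H m
      exact ⟨k, hk, fun q hq heq => absurd ⟨q, hq, heq⟩ hj⟩
  choose f hf hfs using hwitness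
  obtain ⟨g, hg⟩ := M.exists_forall_choiceEquiv hf
  exact ⟨g, (hg p.1).mem_H, fun q hq => (sat_stit_congr (hg q.1)).1 (hfs q.1 q hq rfl)⟩

theorem sat_dia_andList_stit {p : Ag × Form Ag PVar PConst PropVar}
    {L : List (Ag × Form Ag PVar PConst PropVar)} (hnd : ((p :: L).map Prod.fst).Nodup)
    (hs : M.Sat (andList (Form.dia (Form.stit p.1 p.2))
      (L.map fun q => Form.dia (Form.stit q.1 q.2))) m h) :
    M.Sat (Form.dia (andList (Form.stit p.1 p.2) (L.map fun q => Form.stit q.1 q.2))) m h := by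
  simp only [sat_dia, sat_andList, List.forall_mem_cons, List.forall_mem_map] at hs ⊢
  obtain ⟨g, hg, hgs⟩ := exists_forall_sat_stit hnd (List.forall_mem_cons.2 hs)
  exact ⟨g, hg, List.forall_mem_cons.1 hgs⟩

theorem sat_proves_of_re (hA : M.Sat (Form.proves t A) m h) (hR : M.Re m m') :
    M.Sat (Form.proves t A) m' g :=
  ⟨M.ev_mono _ _ _ hR hA.1, fun m'' k hm'' hk => hA.2 m'' k (M.Re_trans hR hm'') hk⟩

theorem Valid.of_ax (hA : Ax A) : M.Valid A := by
  intro m h hh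
  cases hA with
  | a0 hT => exact Valid.of_tautology hT m h hh
  | boxK => exact sat_imp.2 fun hAB => sat_imp.2 fun hA g hg => sat_imp.1 (hAB g hg) (hA g hg)
  | boxT => exact sat_imp.2 fun hA => hA h hh
  | box4 => exact sat_imp.2 fun hA _ _ => hA
  | box5 => exact sat_imp.2 fun hA _ _ => hA
  | stitK =>
    simp only [sat_imp, sat_stit]
    exact fun hAB hA g hg => hAB g hg (hA g hg)
  | stitT => exact sat_imp.2 fun hA => sat_stit.1 hA h (.refl hh)
  | stit4 => exact sat_imp.2 fun hA => sat_stit.2 fun g hg => (sat_stit_congr hg).1 hA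
  | stit5 =>
    exact sat_imp.2 fun hA => sat_stit.2 fun g hg hg' => hA ((sat_stit_congr hg).2 hg')
  | a2 => exact sat_imp.2 fun hA => sat_stit.2 fun g hg => hA g hg.mem_H
  | a3 hnd => exact sat_imp.2 (sat_dia_andList_stit hnd)
  | a4 =>
    simp only [sat_imp]
    exact fun hAB hA => ⟨M.ev_app _ _ _ _ _ hAB.1 hA.1,
      fun m' g hm' hg => sat_imp.1 (hAB.2 m' g hm' hg) (hA.2 m' g hm' hg)⟩
  | a5 =>
    exact sat_imp.2 fun hA => ⟨⟨M.ev_bang _ _ _ hA.1, fun _ _ hm' _ => sat_proves_of_re hA hm'⟩,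
      fun m' g hm' hg => hA.2 m' g (M.R_sub_Re hm') hg⟩
  | a6 =>
    simp only [sat_imp, sat_or]
    rintro (hA | hA)
    · exact ⟨M.ev_sum_left _ _ _ hA.1, hA.2⟩
    · exact ⟨M.ev_sum_right _ _ _ hA.1, hA.2⟩
  | knowK =>
    simp only [sat_imp]
    exact fun hAB hA m' g hm' hg => sat_imp.1 (hAB m' g hm' hg) (hA m' g hm' hg)
  | knowT => exact sat_imp.2 fun hA => hA m h (M.R_refl m) hh
  | know4 =>
    exact sat_imp.2 fun hA m' _ hm' _ m'' g hm'' hg => hA m'' g (M.R_trans hm' hm'') hg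
  | a8 => exact sat_imp.2 fun hA _ _ m' _ hm' _ g hg => hA m' g hm' hg
  | a9 =>
    exact sat_imp.2 fun ht m' _ hm' _ g hg => M.transparent m m' _ (M.R_sub_Re hm') ht g hg

theorem Valid.of_mem_constSpec {CS : Set (Form Ag PVar PConst PropVar)} (hCS : IsConstSpec CS)
    (hN : CSNormal CS M) (hA : A ∈ CS) : M.Valid A := by
  induction hCS.1 A hA with
  | base hB => exact fun m _ _ => ⟨hN _ m _ hA, fun m' g _ hg => Valid.of_ax hB m' g hg⟩
  | step hB ih =>
    cases hB <;> exact fun m _ _ => ⟨hN _ m _ hA, fun m' g _ hg => ih (hCS.2 _ _ _ hA) m' g hg⟩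

theorem actM_eq_act (hh : h ∈ M.H m) (hact : ∀ g ∈ M.H m, M.act m g = M.act m h) :
    M.ActM m = M.act m h :=
  Set.ext fun _ => ⟨fun ht => ht h hh, fun ht g hg => (hact g hg).symm ▸ ht⟩

theorem actM_eq_act_of_next (hnext : M.Next m m') (hh : h ∈ M.H m') :
    M.ActM m' = M.act m h := by
  have hact : ∀ g ∈ M.H m', M.act m g = M.act m h := fun g hg =>
    M.divide m g h (M.H_anti hnext.1.1 hg) (M.H_anti hnext.1.1 hh) ⟨m', hnext.1, hg.2, hh.2⟩
  refine Set.Subset.antisymm (fun t ht => ?_) fun t ht g hg => ?_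
  · obtain ⟨n, g, hn, hg, htg⟩ := M.no_new m' t ht
    rw [← hact g hg]
    rcases eq_or_ne n m with rfl | hne
    · exact htg
    · exact M.expansion m n g ⟨hnext.2 n hn, hne⟩ (M.H_anti hnext.1.1 hg) htg
  · rw [← hact g hg] at ht
    exact M.expansion m' m g hnext.1 hg ht

theorem exists_le_actM_eq_act (hmix : M.MixSucc) (hh : h ∈ M.H m) :
    ∃ m', M.le m m' ∧ M.ActM m' = M.act m h := by
  by_cases hund : ∀ h ∈ M.H m, ∀ g ∈ M.H m, M.Undiv m h g
  · exact ⟨m, M.le_refl m, actM_eq_act hh fun g hg => M.divide m g h hg hh (hund g hg h hh)⟩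
  by_cases hmax : ∃ m₁ ∈ h, M.lt m m₁
  · obtain ⟨m₁, hm₁, hlt⟩ := hmax
    obtain ⟨m', hle, hnext⟩ := (hmix m m₁).resolve_right hund hlt
    exact ⟨m', hnext.1.1, actM_eq_act_of_next hnext ⟨hh.1, hh.1.mem_of_le hm₁ hle⟩⟩
  · have hmax' : ∀ m₁ ∈ h, ¬ M.lt m m₁ := fun m₁ hm₁ hlt => hmax ⟨m₁, hm₁, hlt⟩
    refine ⟨m, M.le_refl m, actM_eq_act hh fun g hg => ?_⟩
    rw [M.eq_of_mem_H_of_forall_not_lt hh hmax' hg]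

theorem Valid.of_proves [Inhabited PropVar] {CS : Set (Form Ag PVar PConst PropVar)}
    (hCS : IsConstSpec CS) (hN : CSNormal CS M) (hmix : M.MixSucc) (hA : Proves CS A) :
    M.Valid A := by
  induction hA with
  | ax hA => exact Valid.of_ax hA
  | mp _ _ ihAB ihA => exact fun m h hh => sat_imp.1 (ihAB m h hh) (ihA m h hh)
  | nec _ ih => exact fun _ _ _ m' g _ hg => ih m' g hg
  | @rd A ts ss _ _ ih =>
    intro m h hh
    obtain ⟨m', hle, hact⟩ := exists_le_actM_eq_act hmix hh
    obtain ⟨g, hg⟩ := M.nonempty_H m'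
    have hann : ∀ t, M.Sat (Form.box (Form.ann t)) m' g ↔ M.Sat (Form.ann t) m h :=
      Set.ext_iff.1 hact
    have hK : M.Sat (Form.know A) m h → M.Sat (Form.know A) m' g := fun hA m'' k hm'' hk =>
      hA m'' k (M.R_trans (M.le_sub_R hle) hm'') hk
    have hlit := ih m' g hg
    rw [sat_imp, sat_bigOr_literals] at hlit ⊢
    simp only [hann] at hlit
    exact fun hA => hlit (hK hA)
  | rcs hB => exact Valid.of_mem_constSpec hCS hN hB

end JstitModel

/-! ### Maximal consistent sets -/

/-- Derivability from the hypotheses `S`: theorems of Σ_D(CS) and members of `S`, closed under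
modus ponens only. Necessitation and (R_D) are not applicable to formulas depending on `S`, so
that the deduction theorem holds. -/
inductive Derivable {Ag PVar PConst PropVar : Type} [Inhabited PropVar]
    (CS S : Set (Form Ag PVar PConst PropVar)) : Form Ag PVar PConst PropVar → Prop
  | hyp {A} : A ∈ S → Derivable CS S A
  | thm {A} : Proves CS A → Derivable CS S A
  | mp {A B} : Derivable CS S (Form.imp A B) → Derivable CS S A → Derivable CS S B

namespace Derivable

variable {Ag PVar PConst PropVar : Type} [Inhabited PropVar]
  {CS S S' : Set (Form Ag PVar PConst PropVar)} {A B : Form Ag PVar PConst PropVar}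

theorem of_tautology (hA : Tautology A) : Derivable CS S A :=
  .thm (.ax (.a0 hA))

theorem mono (hS : S ⊆ S') (hA : Derivable CS S A) : Derivable CS S' A := by
  induction hA with
  | hyp hA => exact .hyp (hS hA)
  | thm hA => exact .thm hA
  | mp _ _ ihAB ihA => exact .mp ihAB ihA

theorem proves_of_empty (hA : Derivable CS ∅ A) : Proves CS A := by
  induction hA with
  | hyp hA => exact hA.elim
  | thm hA => exact hA
  | mp _ _ ihAB ihA => exact .mp ihAB ihA

theorem imp_of_right (hB : Derivable CS S B) : Derivable CS S (Form.imp A B) := by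
  refine .mp (of_tautology fun v hand hneg => ?_) hB
  simp only [Form.imp, hand, hneg]
  grind

theorem imp_intro (hB : Derivable CS (insert A S) B) : Derivable CS S (Form.imp A B) := by
  induction hB with
  | hyp hB =>
    rcases hB with rfl | hB
    · exact of_tautology fun v hand hneg => by simp [Form.imp, hand, hneg]
    · exact imp_of_right (.hyp hB)
  | thm hB => exact imp_of_right (.thm hB)
  | mp _ _ ihBC ihB =>
    refine .mp (.mp (of_tautology fun v hand hneg => ?_) ihBC) ihB
    simp only [Form.imp, hand, hneg]
    grind

theorem neg_elim (hA : Derivable CS S A) (hnA : Derivable CS S (Form.neg A)) :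
    Derivable CS S B := by
  refine .mp (.mp (of_tautology fun v hand hneg => ?_) hA) hnA
  simp only [Form.imp, hand, hneg]
  grind

theorem of_neg_imp_bot (hA : Derivable CS (insert (Form.neg A) S) Form.bot) :
    Derivable CS S A := by
  refine .mp (of_tautology fun v hand hneg => ?_) (imp_intro hA)
  simp only [Form.imp, Form.bot, hand, hneg]
  grind

theorem neg_of_imp_bot (hA : Derivable CS (insert A S) Form.bot) :
    Derivable CS S (Form.neg A) := by
  refine .mp (of_tautology fun v hand hneg => ?_) (imp_intro hA)
  simp only [Form.imp, Form.bot, hand, hneg]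
  grind

theorem and_left (h : Derivable CS S (Form.and A B)) : Derivable CS S A := by
  refine .mp (of_tautology fun v hand hneg => ?_) h
  simp only [Form.imp, hand, hneg]
  grind

theorem and_right (h : Derivable CS S (Form.and A B)) : Derivable CS S B := by
  refine .mp (of_tautology fun v hand hneg => ?_) h
  simp only [Form.imp, hand, hneg]
  grind

theorem and_intro (hA : Derivable CS S A) (hB : Derivable CS S B) :
    Derivable CS S (Form.and A B) := by
  refine .mp (.mp (of_tautology fun v hand hneg => ?_) hA) hB
  simp only [Form.imp, hand, hneg]
  grind

theorem exists_finite_subset (hA : Derivable CS S A) :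
    ∃ T ⊆ S, T.Finite ∧ Derivable CS T A := by
  induction hA with
  | hyp hA => exact ⟨{_}, Set.singleton_subset_iff.2 hA, Set.finite_singleton _, .hyp rfl⟩
  | thm hA => exact ⟨∅, Set.empty_subset S, Set.finite_empty, .thm hA⟩
  | mp _ _ ihAB ihA =>
    obtain ⟨T, hTS, hT, hAB⟩ := ihAB
    obtain ⟨U, hUS, hU, hA⟩ := ihA
    exact ⟨T ∪ U, Set.union_subset hTS hUS, hT.union hU,
      .mp (hAB.mono Set.subset_union_left) (hA.mono Set.subset_union_right)⟩

theorem isOfFiniteCharacter_not_derivable (A : Form Ag PVar PConst PropVar) :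
    Order.IsOfFiniteCharacter {S | ¬ Derivable CS S A} := by
  refine fun S => ⟨fun hS T hTS _ hA => hS (hA.mono hTS), fun hS hA => ?_⟩
  obtain ⟨T, hTS, hT, hA⟩ := hA.exists_finite_subset
  exact hS T hTS hT hA

end Derivable

/-- A maximal CS-consistent set of formulas. -/
structure MCS {Ag PVar PConst PropVar : Type} [Inhabited PropVar]
    (CS : Set (Form Ag PVar PConst PropVar)) where
  carrier : Set (Form Ag PVar PConst PropVar)
  not_derivable_bot : ¬ Derivable CS carrier Form.bot
  mem_or_neg_mem : ∀ A, A ∈ carrier ∨ Form.neg A ∈ carrier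

namespace MCS

variable {Ag PVar PConst PropVar : Type} [Inhabited PropVar]
  {CS S U : Set (Form Ag PVar PConst PropVar)} {A B : Form Ag PVar PConst PropVar}

instance : SetLike (MCS CS) (Form Ag PVar PConst PropVar) where
  coe X := X.carrier
  coe_injective X Y h := by cases X; cases Y; congr

section Lindenbaum

theorem exists_superset (hS : ¬ Derivable CS S Form.bot) : ∃ X : MCS CS, S ⊆ X := by
  obtain ⟨X, hSX, hX⟩ := (Derivable.isOfFiniteCharacter_not_derivable Form.bot).exists_maximal hS
  have hins : ∀ A ∉ X, Derivable CS (insert A X) Form.bot := fun A hA => by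
    by_contra hd
    exact hA (hX.2 hd (Set.subset_insert A X) (Set.mem_insert A X))
  refine ⟨⟨X, hX.1, fun A => or_iff_not_imp_left.2 fun hA => ?_⟩, hSX⟩
  by_contra hnA
  exact hX.1 (.neg_elim (.neg_of_imp_bot (hins A hA)) (.neg_of_imp_bot (hins _ hnA)))

theorem exists_superset_notMem (hA : ¬ Derivable CS S A) : ∃ X : MCS CS, S ⊆ X ∧ A ∉ X := by
  obtain ⟨X, hX⟩ := exists_superset (CS := CS) (S := insert (Form.neg A) S)
    fun hd => hA (.of_neg_imp_bot hd)
  refine ⟨X, (Set.subset_insert _ S).trans hX, fun hAX => X.not_derivable_bot ?_⟩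
  exact .neg_elim (.hyp hAX) (.hyp (hX (Set.mem_insert _ S)))

theorem exists_union_range_subset {ι : Type} {g : ι → Form Ag PVar PConst PropVar}
    (h : ∀ s : Finset ι, ∃ X : MCS CS, U ⊆ X ∧ ∀ i ∈ s, g i ∈ X) :
    ∃ X : MCS CS, U ⊆ X ∧ ∀ i, g i ∈ X := by
  classical
  suffices hd : ¬ Derivable CS (U ∪ Set.range g) Form.bot by
    obtain ⟨X, hX⟩ := exists_superset hd
    exact ⟨X, Set.subset_union_left.trans hX, fun i => hX (.inr ⟨i, rfl⟩)⟩
  intro hd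
  obtain ⟨T, hT, hfin, hd⟩ := hd.exists_finite_subset
  lift T to Finset (Form Ag PVar PConst PropVar) using hfin
  obtain ⟨s, -, hs⟩ := Finset.subset_set_image_iff.1
    (show (T.filter (· ∉ U) : Set _) ⊆ g '' Set.univ by
      intro B hB
      obtain ⟨hBT, hBU⟩ := Finset.mem_filter.1 hB
      exact Set.image_univ.symm ▸ (hT hBT).resolve_left hBU)
  obtain ⟨X, hUX, hX⟩ := h s
  refine X.not_derivable_bot (hd.mono fun B hB => ?_)
  by_cases hBU : B ∈ U
  · exact hUX hBU
  · obtain ⟨i, hi, rfl⟩ := Finset.mem_image.1 (hs ▸ Finset.mem_filter.2 ⟨hB, hBU⟩)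
    exact hX i hi

end Lindenbaum

section Membership

variable {X : MCS CS}

theorem mem_neg : Form.neg A ∈ X ↔ A ∉ X :=
  ⟨fun hnA hA => X.not_derivable_bot (.neg_elim (.hyp hA) (.hyp hnA)),
    (X.mem_or_neg_mem A).resolve_left⟩

theorem mem_of_derivable (hA : Derivable CS X A) : A ∈ X := by
  by_contra hnA
  exact X.not_derivable_bot (.neg_elim hA (.hyp (mem_neg.2 hnA)))

theorem mem_of_proves (hA : Proves CS A) : A ∈ X :=
  mem_of_derivable (.thm hA)

theorem mem_and : Form.and A B ∈ X ↔ A ∈ X ∧ B ∈ X :=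
  ⟨fun h => ⟨mem_of_derivable (.and_left (.hyp h)), mem_of_derivable (.and_right (.hyp h))⟩,
    fun h => mem_of_derivable (.and_intro (.hyp h.1) (.hyp h.2))⟩

theorem mem_imp : Form.imp A B ∈ X ↔ (A ∈ X → B ∈ X) := by
  simp [Form.imp, mem_neg, mem_and]

theorem mem_or : Form.or A B ∈ X ↔ A ∈ X ∨ B ∈ X := by
  simp only [Form.or, mem_neg, mem_and]
  tauto

theorem bot_notMem : Form.bot ∉ X := by
  simp [Form.bot, mem_neg, mem_and]

theorem mem_of_ax (h : Ax (Form.imp A B)) (hA : A ∈ X) : B ∈ X :=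
  mem_imp.1 (mem_of_proves (.ax h)) hA

theorem mem_andList {L : List (Form Ag PVar PConst PropVar)} :
    andList A L ∈ X ↔ ∀ B ∈ A :: L, B ∈ X := by
  induction L generalizing A with
  | nil => simp [andList]
  | cons B L ih => simp [andList, mem_and, ih]

theorem mem_bigOr {L : List (Form Ag PVar PConst PropVar)} :
    bigOr L ∈ X ↔ ∃ B ∈ L, B ∈ X := by
  induction L with
  | nil => simp [bigOr, bot_notMem]
  | cons B L ih =>
    cases L with
    | nil => simp [bigOr]
    | cons C L => simp [bigOr, mem_or, ih]

theorem mem_bigOr_literals {ι : Type} {ts ss : List ι} {f : ι → Form Ag PVar PConst PropVar} :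
    bigOr ((ts.map fun t => Form.neg (f t)) ++ ss.map f) ∈ X ↔
      (∃ t ∈ ts, f t ∉ X) ∨ ∃ s ∈ ss, f s ∈ X := by
  simp only [mem_bigOr, List.mem_append, List.mem_map, or_and_right, exists_or]
  simp [mem_neg]

theorem exists_mem_iff_forall_mem (L : List (Form Ag PVar PConst PropVar)) :
    ∃ C, ∀ Y : MCS CS, C ∈ Y ↔ ∀ B ∈ L, B ∈ Y := by
  cases L with
  | nil => exact ⟨Form.imp Form.bot Form.bot, fun Y => by simp [mem_imp]⟩
  | cons B L => exact ⟨andList B L, fun Y => mem_andList⟩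

end Membership

theorem derivable_iff : Derivable CS S A ↔ ∀ X : MCS CS, S ⊆ X → A ∈ X := by
  refine ⟨fun hA X hX => mem_of_derivable (hA.mono hX), fun hA => ?_⟩
  by_contra hd
  obtain ⟨X, hSX, hAX⟩ := exists_superset_notMem hd
  exact hAX (hA X hSX)

theorem proves_iff : Proves CS A ↔ ∀ X : MCS CS, A ∈ X :=
  ⟨fun hA _ => mem_of_proves hA,
    fun hA => (derivable_iff.2 fun X _ => hA X).proves_of_empty⟩

theorem csConsistent_iff [Nonempty (MCS CS)] {Γ : Set (Form Ag PVar PConst PropVar)} :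
    CSConsistent CS Γ ↔ ∃ X : MCS CS, Γ ⊆ X := by
  refine ⟨fun hΓ => exists_superset fun hd => hΓ ?_, ?_⟩
  · obtain ⟨T, hTΓ, hT, hd⟩ := hd.exists_finite_subset
    lift T to Finset (Form Ag PVar PConst PropVar) using hT
    cases hL : T.toList with
    | nil =>
      obtain ⟨X⟩ := ‹Nonempty (MCS CS)›
      rw [Finset.toList_eq_nil] at hL
      simp only [hL, Finset.coe_empty] at hd
      exact absurd (mem_of_proves hd.proves_of_empty) X.bot_notMem
    | cons A L =>
      have hTL : ∀ B, B ∈ T ↔ B ∈ A :: L := fun B => by rw [← hL, Finset.mem_toList]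
      refine ⟨A, L, hTΓ ((hTL A).2 List.mem_cons_self),
        fun B hB => hTΓ ((hTL B).2 (List.mem_cons_of_mem A hB)), proves_iff.2 fun X => ?_⟩
      rw [mem_imp, mem_andList]
      exact fun hAL => derivable_iff.1 hd X fun B hB => hAL B ((hTL B).1 hB)
  · rintro ⟨X, hX⟩ ⟨A, L, hA, hL, hbot⟩
    refine X.bot_notMem (mem_imp.1 (mem_of_proves hbot) (mem_andList.2 ?_))
    exact List.forall_mem_cons.2 ⟨hX hA, fun B hB => hX (hL B hB)⟩

end MCS

/-! ### Modalities and canonical accessibility -/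

section Modalities

variable {Ag PVar PConst PropVar : Type} [Inhabited PropVar]
  {CS : Set (Form Ag PVar PConst PropVar)}
  {f : Form Ag PVar PConst PropVar → Form Ag PVar PConst PropVar}

/-- The unary operator `f` is a normal S4 modality of Σ_D(CS). -/
structure IsS4 (CS : Set (Form Ag PVar PConst PropVar))
    (f : Form Ag PVar PConst PropVar → Form Ag PVar PConst PropVar) : Prop where
  nec {A} : Proves CS A → Proves CS (f A)
  distrib {A B} : Proves CS (Form.imp (f (Form.imp A B)) (Form.imp (f A) (f B)))
  refl {A} : Proves CS (Form.imp (f A) A)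
  trans {A} : Proves CS (Form.imp (f A) (f (f A)))

/-- The unary operator `f` is a normal S5 modality of Σ_D(CS). -/
structure IsS5 (CS : Set (Form Ag PVar PConst PropVar))
    (f : Form Ag PVar PConst PropVar → Form Ag PVar PConst PropVar) : Prop extends IsS4 CS f where
  eucl {A} : Proves CS (Form.imp (Form.neg (f A)) (f (Form.neg (f A))))

theorem isS4_know : IsS4 CS Form.know :=
  ⟨.nec, .ax .knowK, .ax .knowT, .ax .know4⟩

theorem isS5_box : IsS5 CS Form.box where
  nec hA := .mp (.ax .knowT) (.mp (.ax .boxT) (.mp (.ax .a8) (.nec hA)))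
  distrib := .ax .boxK
  refl := .ax .boxT
  trans := .ax .box4
  eucl := .ax .box5

theorem isS5_stit (j : Ag) : IsS5 CS (Form.stit j) where
  nec hA := .mp (.ax .a2) (isS5_box.nec hA)
  distrib := .ax .stitK
  refl := .ax .stitT
  trans := .ax .stit4
  eucl := .ax .stit5

namespace MCS

variable {A : Form Ag PVar PConst PropVar} {X Y Z : MCS CS} {j : Ag} {t : Pol PVar PConst}

/-- The canonical accessibility relation of the modality `f`. For S4 modalities it agrees with
the usual relation `{A | f A ∈ X} ⊆ Y`, see `IsS4.acc_iff_subset`. -/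
def Acc (f : Form Ag PVar PConst PropVar → Form Ag PVar PConst PropVar) (X Y : MCS CS) : Prop :=
  ∀ ⦃A⦄, f A ∈ X → f A ∈ Y

theorem Acc.refl (X : MCS CS) : Acc f X X :=
  fun _ hA => hA

theorem Acc.trans (hXY : Acc f X Y) (hYZ : Acc f Y Z) : Acc f X Z :=
  fun _ hA => hYZ (hXY hA)

end MCS

open MCS

variable {A : Form Ag PVar PConst PropVar} {X Y Z : MCS CS} {j : Ag} {t : Pol PVar PConst}

theorem IsS4.mem_of_mem (hf : IsS4 CS f) (hA : f A ∈ X) : A ∈ X :=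
  mem_imp.1 (mem_of_proves hf.refl) hA

theorem IsS4.acc_iff_subset (hf : IsS4 CS f) : Acc f X Y ↔ {A | f A ∈ X} ⊆ Y :=
  ⟨fun hXY _ hA => hf.mem_of_mem (hXY hA),
    fun hXY _ hA => hXY (mem_imp.1 (mem_of_proves hf.trans) hA)⟩

theorem IsS4.mem_of_derivable (hf : IsS4 CS f) (hA : Derivable CS {B | f B ∈ X} A) : f A ∈ X := by
  induction hA with
  | hyp hA => exact hA
  | thm hA => exact mem_of_proves (hf.nec hA)
  | mp _ _ ihAB ihA => exact mem_imp.1 (mem_imp.1 (mem_of_proves hf.distrib) ihAB) ihA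

theorem IsS4.mem_iff (hf : IsS4 CS f) : f A ∈ X ↔ ∀ Y, Acc f X Y → A ∈ Y :=
  ⟨fun hA _ hXY => hf.mem_of_mem (hXY hA),
    fun hA => hf.mem_of_derivable (derivable_iff.2 fun Y hXY => hA Y (hf.acc_iff_subset.2 hXY))⟩

theorem IsS5.acc_symm (hf : IsS5 CS f) (hXY : Acc f X Y) : Acc f Y X := by
  intro A hA
  by_contra hnA
  have hneg : f (Form.neg (f A)) ∈ X := mem_imp.1 (mem_of_proves hf.eucl) (mem_neg.2 hnA)
  exact mem_neg.1 (hf.mem_of_mem (hXY hneg)) hA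

theorem IsS5.equivalence_acc (hf : IsS5 CS f) : Equivalence (Acc (CS := CS) f) :=
  ⟨.refl, hf.acc_symm, .trans⟩

namespace MCS

theorem mem_dia : Form.dia A ∈ X ↔ ∃ Y, Acc Form.box X Y ∧ A ∈ Y := by
  simp [Form.dia, mem_neg, isS5_box.mem_iff (CS := CS)]

theorem Acc.box_of_stit (hXY : Acc (Form.stit j) X Y) : Acc Form.box X Y :=
  fun _ hA => mem_of_ax .stitT (hXY (mem_of_ax .a2 (mem_of_ax .box4 hA)))

theorem Acc.know_of_box (hXY : Acc Form.box X Y) : Acc Form.know X Y :=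
  fun _ hA => mem_of_ax .boxT <| mem_of_ax .knowT <| mem_of_ax .boxT <|
    hXY (mem_of_ax .a8 (mem_of_ax .know4 hA))

theorem Acc.box_ann_mem (hXY : Acc Form.know X Y) (ht : Form.box (Form.ann t) ∈ X) :
    Form.box (Form.ann t) ∈ Y :=
  mem_of_ax .knowT (hXY (mem_of_ax .a9 ht))

theorem Acc.proves_mem (hXY : Acc Form.know X Y) (hA : Form.proves t A ∈ X) :
    Form.proves t A ∈ Y :=
  mem_of_ax .knowT (hXY (mem_and.1 (mem_of_ax .a5 (mem_and.1 (mem_of_ax .a5 hA)).1)).2)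

theorem exists_acc_know_forall_mem (X : MCS CS) (L : List (Pol PVar PConst)) :
    ∃ Y, Acc Form.know X Y ∧ ∀ t ∈ L, Form.box (Form.ann t) ∈ Y ↔ Form.ann t ∈ X := by
  classical
  by_contra! hX
  set ts := L.filter fun t => Form.ann t ∈ X with hts
  set ss := L.filter fun t => Form.ann t ∉ X with hss
  let D : Form Ag PVar PConst PropVar :=
    bigOr ((ts.map fun t => Form.neg (Form.box (Form.ann t))) ++
      ss.map fun s => Form.box (Form.ann s))
  have hKD : Form.know D ∈ X := by
    refine isS4_know.mem_iff.2 fun Y hXY => mem_bigOr_literals.2 ?_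
    obtain ⟨t, htL, ht⟩ := hX Y hXY
    by_cases htX : Form.ann t ∈ X
    · exact .inl ⟨t, by simp [hts, htL, htX], by tauto⟩
    · exact .inr ⟨t, by simp [hss, htL, htX], by tauto⟩
  have hne : ts ++ ss ≠ [] := by
    obtain ⟨t, htL, -⟩ := hX X (.refl X)
    refine List.ne_nil_of_mem (a := t) ?_
    simpa [hts, hss, htL] using em _
  have hlit := mem_imp.1 (mem_of_proves (.rd hne (.ax .knowT))) hKD
  rcases mem_bigOr_literals.1 hlit with ⟨t, ht, htX⟩ | ⟨t, ht, htX⟩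
  · exact htX (by simpa using (List.mem_filter.1 ht).2)
  · exact absurd htX (by simpa using (List.mem_filter.1 ht).2)

theorem exists_acc_know_box_ann_mem_iff (X : MCS CS) :
    ∃ Y, Acc Form.know X Y ∧ ∀ t, Form.box (Form.ann t) ∈ Y ↔ Form.ann t ∈ X := by
  classical
  have hlit : ∀ (Y : MCS CS) t,
      (if Form.ann t ∈ X then Form.box (Form.ann t) else Form.neg (Form.box (Form.ann t))) ∈ Y ↔
        (Form.box (Form.ann t) ∈ Y ↔ Form.ann t ∈ X) := by
    intro Y t
    split_ifs with ht <;> simp [ht, mem_neg]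
  obtain ⟨Y, hXY, hY⟩ := exists_union_range_subset (CS := CS) (U := {A | Form.know A ∈ X})
    fun s => by
      obtain ⟨Y, hXY, hY⟩ := exists_acc_know_forall_mem X s.toList
      exact ⟨Y, isS4_know.acc_iff_subset.1 hXY,
        fun t ht => (hlit Y t).2 (hY t (Finset.mem_toList.2 ht))⟩
  exact ⟨Y, isS4_know.acc_iff_subset.2 hXY, fun t => (hlit Y t).1 (hY t)⟩

theorem exists_acc_box_forall_stit_mem {F : Ag → Form Ag PVar PConst PropVar} {L : List Ag}
    (hL : L.Nodup) (hF : ∀ j ∈ L, Form.dia (Form.stit j (F j)) ∈ Z) :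
    ∃ Y, Acc Form.box Z Y ∧ ∀ j ∈ L, Form.stit j (F j) ∈ Y := by
  cases L with
  | nil => exact ⟨Z, .refl Z, by simp⟩
  | cons j L =>
    have hA3 := mem_of_ax (X := Z) (.a3 (p := (j, F j)) (L := L.map fun i => (i, F i))
      (by simpa [Function.comp_def] using hL)) (mem_andList.2 (by simpa using hF))
    obtain ⟨Y, hZY, hY⟩ := mem_dia.1 hA3
    exact ⟨Y, hZY, by simpa using mem_andList.1 hY⟩

theorem exists_forall_acc_stit {F : Ag → MCS CS} (hF : ∀ j, Acc Form.box Z (F j)) :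
    ∃ W, Acc Form.box Z W ∧ ∀ j, Acc (Form.stit j) (F j) W := by
  classical
  obtain ⟨W, hZW, hW⟩ := exists_union_range_subset (CS := CS) (U := {A | Form.box A ∈ Z})
    (g := fun p : {p : Ag × Form Ag PVar PConst PropVar // Form.stit p.1 p.2 ∈ F p.1} =>
      Form.stit p.1.1 p.1.2) fun s => by
    have hconj : ∀ j, ∃ C, ∀ Y : MCS CS,
        C ∈ Y ↔ ∀ B ∈ ((s.filter (·.1.1 = j)).image (·.1.2)).toList, B ∈ Y :=
      fun j => exists_mem_iff_forall_mem _
    simp only [Finset.mem_toList, Finset.forall_mem_image, Finset.mem_filter, and_imp] at hconj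
    choose G hG using hconj
    have hGF : ∀ j, Form.stit j (G j) ∈ F j := fun j => by
      refine (isS5_stit j).mem_iff.2 fun Y hY => (hG j Y).2 ?_
      rintro ⟨p, hp⟩ - rfl
      exact (isS5_stit p.1).mem_of_mem (hY hp)
    obtain ⟨Y, hZY, hY⟩ := exists_acc_box_forall_stit_mem (F := G)
      (s.image (·.1.1)).nodup_toList fun j _ => mem_dia.2 ⟨F j, hF j, hGF j⟩
    refine ⟨Y, isS5_box.acc_iff_subset.1 hZY, fun p hp => ?_⟩
    have hGY := hY p.1.1 (Finset.mem_toList.2 (Finset.mem_image_of_mem _ hp))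
    refine (isS5_stit _).mem_iff.2 fun Y' hYY' => ?_
    exact (hG _ Y').1 ((isS5_stit _).mem_of_mem (hYY' hGY)) hp rfl
  exact ⟨W, isS5_box.acc_iff_subset.2 hZW, fun j B hB => hW ⟨(j, B), hB⟩⟩

end MCS

end Modalities

/-! ### The tree of finite sequences -/

/-- The tree of finite sequences over `D`, ordered by end extension. Sequences are written
backwards: the immediate successors of `σ` are the lists `d :: σ`. -/
def listTree (D : Type) : TemporalFrame (List D) where
  le σ τ := σ <:+ τ
  le_refl := List.suffix_refl
  le_antisymm h h' := h.eq_of_length (le_antisymm h.length_le h'.length_le)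
  le_trans h h' := h.trans h'
  nonempty := ⟨[]⟩
  hist_conn _ _ := ⟨[], List.nil_suffix, List.nil_suffix⟩
  no_backward _ _ _ h h' := List.suffix_or_suffix_of_suffix h h'

namespace listTree

variable {D : Type} {σ τ : List D} {d : D} {h g : Set (List D)}

theorem lt_cons (d : D) (σ : List D) : (listTree D).lt σ (d :: σ) :=
  ⟨List.suffix_cons d σ, (List.cons_ne_self d σ).symm⟩

theorem exists_cons_le_of_lt (hlt : (listTree D).lt σ τ) : ∃ d, (listTree D).le (d :: σ) τ := by
  obtain ⟨⟨l, rfl⟩, hne⟩ := hlt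
  rcases List.eq_nil_or_concat l with rfl | ⟨l, d, rfl⟩
  · exact absurd rfl hne
  · exact ⟨d, l, by simp⟩

theorem next_cons (d : D) (σ : List D) : (listTree D).Next σ (d :: σ) :=
  ⟨lt_cons d σ, fun _ hlt => (List.suffix_cons_iff.1 hlt.1).resolve_left hlt.2⟩

theorem mixSucc : (listTree D).MixSucc := fun σ _ => .inl fun hlt =>
  let ⟨d, hd⟩ := exists_cons_le_of_lt hlt
  ⟨d :: σ, hd, next_cons d σ⟩

theorem le_of_length_le (hh : (listTree D).IsHistory h) (hσ : σ ∈ h) (hτ : τ ∈ h)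
    (hl : σ.length ≤ τ.length) : (listTree D).le σ τ := by
  rcases hh.le_or_le hσ hτ with hle | hle
  · exact hle
  · rw [List.IsSuffix.eq_of_length_le hle hl]
    exact List.suffix_rfl

theorem exists_cons_mem [Nonempty D] (hh : h ∈ (listTree D).H σ) : ∃ d, d :: σ ∈ h := by
  by_cases hmax : ∃ τ ∈ h, (listTree D).lt σ τ
  · obtain ⟨τ, hτ, hlt⟩ := hmax
    obtain ⟨d, hd⟩ := exists_cons_le_of_lt hlt
    exact ⟨d, hh.1.mem_of_le hτ hd⟩
  · refine ⟨Classical.arbitrary D, hh.1.mem_of_forall_le_or_le fun τ hτ => .inr ?_⟩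
    have hle : (listTree D).le τ σ := by
      rcases hh.1.le_or_le hτ hh.2 with hle | hle
      · exact hle
      · obtain rfl : σ = τ := by_contra fun hne => hmax ⟨τ, hτ, hle, hne⟩
        exact hle
    exact List.IsSuffix.trans hle (List.suffix_cons _ σ)

variable [Nonempty D]

/-- The letter with which the history `h` continues after the moment `σ`; a junk value if `h`
does not pass through `σ`. -/
noncomputable def label (h : Set (List D)) (σ : List D) : D :=
  Classical.epsilon fun d => d :: σ ∈ h

theorem label_cons_mem (hh : h ∈ (listTree D).H σ) : label h σ :: σ ∈ h :=
  Classical.epsilon_spec (exists_cons_mem hh)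

theorem label_eq (hh : h ∈ (listTree D).H (d :: σ)) : label h σ = d := by
  have hσ : h ∈ (listTree D).H σ := TemporalFrame.H_anti (lt_cons d σ).1 hh
  have hle := le_of_length_le hh.1 (label_cons_mem hσ) hh.2 le_rfl
  exact (List.cons.inj (List.IsSuffix.eq_of_length hle rfl)).1

theorem label_eq_of_undiv (hu : (listTree D).Undiv σ h g) (hh : h ∈ (listTree D).H σ)
    (hg : g ∈ (listTree D).H σ) : label h σ = label g σ := by
  obtain ⟨τ, hlt, hτh, hτg⟩ := hu
  obtain ⟨d, hd⟩ := exists_cons_le_of_lt hlt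
  rw [label_eq ⟨hh.1, hh.1.mem_of_le hτh hd⟩, label_eq ⟨hg.1, hg.1.mem_of_le hτg hd⟩]

theorem exists_label_eq (σ : List D) (d : D) : ∃ h ∈ (listTree D).H σ, label h σ = d := by
  obtain ⟨h, hh⟩ := (listTree D).nonempty_H (d :: σ)
  exact ⟨h, TemporalFrame.H_anti (lt_cons d σ).1 hh, label_eq hh⟩

theorem label_cons_le_label_cons (hlt : (listTree D).le σ τ) (hh : h ∈ (listTree D).H τ) :
    (listTree D).le (label h σ :: σ) (label h τ :: τ) :=
  le_of_length_le hh.1 (label_cons_mem (TemporalFrame.H_anti hlt hh)) (label_cons_mem hh)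
    (Nat.succ_le_succ (List.IsSuffix.length_le hlt))

end listTree

/-! ### Theories of models -/

section Soundness

variable {Mo Ag PVar PConst PropVar : Type} [Inhabited PropVar]
  {CS : Set (Form Ag PVar PConst PropVar)}

/-- The maximal consistent set of all formulas satisfied at a moment-history pair of a CS-normal
model over a mixed successor frame. -/
def JstitModel.theory (M : JstitModel Mo Ag PVar PConst PropVar) (hCS : IsConstSpec CS)
    (hN : CSNormal CS M) (hmix : M.MixSucc) {m : Mo} {h : Set Mo} (hh : h ∈ M.H m) :
    MCS CS where
  carrier := {A | M.Sat A m h}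
  not_derivable_bot hbot := by
    suffices hsat : ∀ A, Derivable CS {A | M.Sat A m h} A → M.Sat A m h from
      JstitModel.not_sat_bot (hsat _ hbot)
    intro A hA
    induction hA with
    | hyp hA => exact hA
    | thm hA => exact JstitModel.Valid.of_proves hCS hN hmix hA m h hh
    | mp _ _ ihAB ihA => exact JstitModel.sat_imp.1 ihAB ihA
  mem_or_neg_mem _ := em _

/-- The model over the stit frame `S` in which no proof is ever presented, every proof polynomial
is evidence for every formula, and all moments are epistemically indistinguishable. -/
def silentModel (PVar PConst PropVar : Type) (S : StitFrame Mo Ag) :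
    JstitModel Mo Ag PVar PConst PropVar where
  toStitFrame := S
  R _ _ := True
  Re _ _ := True
  R_refl _ := trivial
  R_trans _ _ := trivial
  Re_refl _ := trivial
  Re_trans _ _ := trivial
  R_sub_Re _ := trivial
  le_sub_R _ := trivial
  act _ _ := ∅
  ev _ _ := Set.univ
  val _ := ∅
  ev_mono _ _ _ _ := Set.Subset.rfl
  ev_app _ _ _ _ _ _ _ := trivial
  ev_sum_left _ _ _ := Set.Subset.rfl
  ev_sum_right _ _ _ := Set.Subset.rfl
  ev_bang _ _ _ _ := trivial
  expansion _ _ _ _ _ := Set.Subset.rfl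
  no_new m _ ht := ((S.nonempty_H m).elim fun h hh => ht h hh).elim
  divide _ _ _ _ _ _ := rfl
  transparent m _ _ _ ht := ((S.nonempty_H m).elim fun h hh => ht h hh).elim

theorem exists_mcs_forall_box_ann_notMem (hCS : IsConstSpec CS) :
    ∃ X : MCS CS, ∀ t, Form.box (Form.ann t) ∉ X := by
  let T := listTree Unit
  let S : StitFrame (List Unit) Ag := .ofEquivalence T (fun _ _ _ _ => True)
    (fun _ _ => ⟨fun _ => trivial, fun _ => trivial, fun _ _ => trivial⟩)
    (fun _ _ _ _ _ _ _ => trivial)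
    fun m _ _ => (T.nonempty_H m).imp fun _ hh => ⟨hh, fun _ => trivial⟩
  obtain ⟨h, hh⟩ := T.nonempty_H []
  exact ⟨(silentModel PVar PConst PropVar S).theory hCS (fun _ _ _ _ => trivial)
    listTree.mixSucc hh, fun t ht => ht h hh⟩

theorem CSConsistent.of_sat {Γ : Set (Form Ag PVar PConst PropVar)}
    {M : JstitModel Mo Ag PVar PConst PropVar} {m : Mo} {h : Set Mo} (hCS : IsConstSpec CS)
    (hN : CSNormal CS M) (hmix : M.MixSucc) (hh : h ∈ M.H m) (hΓ : ∀ A ∈ Γ, M.Sat A m h) :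
    CSConsistent CS Γ :=
  have : Nonempty (MCS CS) := ⟨M.theory hCS hN hmix hh⟩
  MCS.csConsistent_iff.2 ⟨M.theory hCS hN hmix hh, hΓ⟩

end Soundness

/-! ### The canonical model -/

namespace MCS

variable {Ag PVar PConst PropVar : Type} [Inhabited PropVar]
  {CS : Set (Form Ag PVar PConst PropVar)} {X d : MCS CS}

/-- A maximal consistent set, epistemically accessible from `X`, in which exactly the proofs
presented in `X` are presented under every history. -/
noncomputable def next (X : MCS CS) : MCS CS :=
  (exists_acc_know_box_ann_mem_iff X).choose

theorem acc_know_next (X : MCS CS) : Acc Form.know X (next X) :=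
  (exists_acc_know_box_ann_mem_iff X).choose_spec.1

theorem box_ann_mem_next {t : Pol PVar PConst} :
    Form.box (Form.ann t) ∈ next X ↔ Form.ann t ∈ X :=
  (exists_acc_know_box_ann_mem_iff X).choose_spec.2 t

open Classical in
/-- The member of the `□`-class of `X` designated by `d`: the set `d` itself if it lies in that
class, and `X` otherwise. -/
noncomputable def follow (X d : MCS CS) : MCS CS :=
  if Acc Form.box X d then d else X

theorem acc_box_follow (X d : MCS CS) : Acc Form.box X (follow X d) := by
  unfold follow
  split_ifs with hd
  · exact hd
  · exact .refl X

theorem follow_eq (hd : Acc Form.box X d) : follow X d = d :=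
  if_pos hd

end MCS

namespace CanonicalModel

open MCS

variable {Ag PVar PConst PropVar : Type} [Inhabited PropVar]
  {CS : Set (Form Ag PVar PConst PropVar)} [Nonempty (MCS CS)]
  {σ τ υ : List (MCS CS)} {h g : Set (List (MCS CS))} {d W : MCS CS} {j : Ag}
  {t : Pol PVar PConst} {A : Form Ag PVar PConst PropVar}

/-- A representative of the `□`-class of maximal consistent sets attached to a moment of the
canonical tree. A letter `d` appended to `σ ≠ []` selects a member of the class of `σ`, whose
successor `next` represents the new moment. The class of the root is irrelevant: it only has to
exist, since truth is never evaluated there. -/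
noncomputable def momentState : List (MCS CS) → MCS CS
  | [] => Classical.arbitrary _
  | [d] => d
  | d :: e :: σ => next (follow (momentState (e :: σ)) d)

/-- The maximal consistent set of the formulas that are true at `(σ, h)`. -/
noncomputable def historyState (σ : List (MCS CS)) (h : Set (List (MCS CS))) : MCS CS :=
  follow (momentState σ) (listTree.label h σ)

theorem momentState_cons (hσ : σ ≠ []) (d : MCS CS) :
    momentState (d :: σ) = next (follow (momentState σ) d) := by
  cases σ with
  | nil => exact absurd rfl hσ
  | cons e σ => rw [momentState]

theorem acc_box_historyState (σ : List (MCS CS)) (h : Set (List (MCS CS))) :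
    Acc Form.box (momentState σ) (historyState σ h) :=
  acc_box_follow _ _

theorem exists_historyState_eq (hW : Acc Form.box (momentState σ) W) :
    ∃ h ∈ (listTree (MCS CS)).H σ, historyState σ h = W := by
  obtain ⟨h, hh, hl⟩ := listTree.exists_label_eq σ W
  exact ⟨h, hh, by rw [historyState, hl, follow_eq hW]⟩

theorem exists_historyState_eq_of_acc_box (hW : Acc Form.box (historyState σ h) W) :
    ∃ g ∈ (listTree (MCS CS)).H σ, historyState σ g = W :=
  exists_historyState_eq ((acc_box_historyState σ h).trans hW)

/-- Both epistemic relations of the canonical model. The root sees every moment, and every other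
moment sees the moments epistemically accessible from it other than the root. -/
def canonR (σ τ : List (MCS CS)) : Prop :=
  σ = [] ∨ τ ≠ [] ∧ Acc Form.know (momentState σ) (momentState τ)

theorem canonR_refl (σ : List (MCS CS)) : canonR σ σ :=
  or_iff_not_imp_left.2 fun hσ => ⟨hσ, .refl _⟩

theorem canonR_trans : canonR σ τ → canonR τ υ → canonR σ υ := by
  rintro (hσ | ⟨hτ, hστ⟩) (hτ' | ⟨hυ, hτυ⟩)
  · exact .inl hσ
  · exact .inl hσ
  · exact absurd hτ' hτ
  · exact .inr ⟨hυ, hστ.trans hτυ⟩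

theorem canonR_of_le (hle : (listTree (MCS CS)).le σ τ) : canonR σ τ := by
  obtain ⟨l, rfl⟩ := hle
  induction l with
  | nil => exact canonR_refl σ
  | cons d l ih =>
    refine or_iff_not_imp_left.2 fun hσ => ?_
    obtain ⟨hne, hacc⟩ := ih.resolve_left hσ
    refine ⟨List.cons_ne_nil _ _, ?_⟩
    rw [List.cons_append, momentState_cons hne]
    exact (hacc.trans (acc_box_follow _ d).know_of_box).trans (acc_know_next _)

theorem know_mem_historyState (hσ : σ ≠ []) (hR : canonR σ τ)
    (hA : Form.know A ∈ historyState σ h) (g : Set (List (MCS CS))) : A ∈ historyState τ g :=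
  have hστ := (hR.resolve_left hσ).2
  have hbox := isS5_box.acc_symm (acc_box_historyState σ h)
  isS4_know.mem_of_mem <| (acc_box_historyState τ g).know_of_box <| hστ <| hbox.know_of_box hA

theorem know_mem_historyState_iff (hσ : σ ≠ []) :
    Form.know A ∈ historyState σ h ↔
      ∀ τ g, canonR σ τ → g ∈ (listTree (MCS CS)).H τ → A ∈ historyState τ g := by
  refine ⟨fun hA τ g hR _ => know_mem_historyState hσ hR hA g,
    fun hA => isS4_know.mem_iff.2 fun W hW => ?_⟩
  obtain ⟨g, hg, hgW⟩ := exists_historyState_eq (σ := [W]) (.refl W)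
  have hR : canonR σ [W] :=
    .inr ⟨List.cons_ne_nil _ _, (acc_box_historyState σ h).know_of_box.trans hW⟩
  exact hgW ▸ hA [W] g hR hg

theorem box_mem_historyState_iff :
    Form.box A ∈ historyState σ h ↔ ∀ g ∈ (listTree (MCS CS)).H σ, A ∈ historyState σ g := by
  constructor
  · exact fun hA g _ => isS5_box.mem_of_mem <|
      acc_box_historyState σ g <| isS5_box.acc_symm (acc_box_historyState σ h) hA
  · refine fun hA => isS5_box.mem_iff.2 fun W hW => ?_
    obtain ⟨g, hg, rfl⟩ := exists_historyState_eq_of_acc_box hW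
    exact hA g hg

/-- The stit frame of the canonical model: agent `j` cannot tell apart at `σ` the histories whose
states satisfy the same formulas `[j]A`. -/
noncomputable def canonStitFrame (CS : Set (Form Ag PVar PConst PropVar)) [Nonempty (MCS CS)] :
    StitFrame (List (MCS CS)) Ag :=
  .ofEquivalence (listTree (MCS CS))
    (fun σ j h g => Acc (Form.stit j) (historyState σ h) (historyState σ g))
    (fun σ j => (isS5_stit j).equivalence_acc.comap (historyState σ))
    (fun σ j h hh g hg hu => by
      simpa only [historyState, listTree.label_eq_of_undiv hu hh hg] using Acc.refl _)
    fun σ f _ => by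
      obtain ⟨W, hW, hf⟩ := exists_forall_acc_stit fun j => acc_box_historyState σ (f j)
      obtain ⟨g, hg, rfl⟩ := exists_historyState_eq hW
      exact ⟨g, hg, hf⟩

theorem stit_mem_historyState_iff (hh : h ∈ (listTree (MCS CS)).H σ) :
    Form.stit j A ∈ historyState σ h ↔
      ∀ g, (canonStitFrame CS).ChoiceEquiv σ j h g → A ∈ historyState σ g := by
  simp only [canonStitFrame, StitFrame.choiceEquiv_ofEquivalence hh, (isS5_stit j).mem_iff]
  refine ⟨fun hA g hg => hA _ hg.2, fun hA W hW => ?_⟩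
  obtain ⟨g, hg, rfl⟩ := exists_historyState_eq_of_acc_box hW.box_of_stit
  exact hA g ⟨hg, hW⟩

/-- The proofs presented at `(σ, h)` in the canonical model, read off the next moment of `h`. -/
def canonAct (σ : List (MCS CS)) (h : Set (List (MCS CS))) : Set (Pol PVar PConst) :=
  {t | Form.box (Form.ann t) ∈ momentState (listTree.label h σ :: σ)}

theorem mem_canonAct :
    t ∈ canonAct σ h ↔ Form.box (Form.ann t) ∈ momentState (listTree.label h σ :: σ) :=
  Iff.rfl

theorem mem_canonAct_iff_ann_mem (hσ : σ ≠ []) :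
    t ∈ canonAct σ h ↔ Form.ann t ∈ historyState σ h := by
  rw [mem_canonAct, momentState_cons hσ, box_ann_mem_next, historyState]

theorem forall_mem_canonAct_iff (hσ : σ ≠ []) :
    (∀ h ∈ (listTree (MCS CS)).H σ, t ∈ canonAct σ h) ↔
      Form.box (Form.ann t) ∈ momentState σ := by
  obtain ⟨h, -⟩ := (listTree (MCS CS)).nonempty_H σ
  simp only [mem_canonAct_iff_ann_mem hσ, ← box_mem_historyState_iff (h := h)]
  exact ⟨fun ht => isS5_box.acc_symm (acc_box_historyState σ h) ht,
    fun ht => acc_box_historyState σ h ht⟩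

theorem not_forall_mem_canonAct_nil (hCS : IsConstSpec CS) :
    ¬ ∀ h ∈ (listTree (MCS CS)).H [], t ∈ canonAct [] h := by
  intro ht
  obtain ⟨X, hX⟩ := exists_mcs_forall_box_ann_notMem hCS
  obtain ⟨h, hh, hl⟩ := listTree.exists_label_eq [] X
  have hXt := ht h hh
  rw [mem_canonAct, hl, momentState] at hXt
  exact hX t hXt

theorem canonAct_subset (hle : (listTree (MCS CS)).lt σ τ) (hh : h ∈ (listTree (MCS CS)).H τ) :
    canonAct σ h ⊆ canonAct τ h := fun _ ht =>
  have hR := canonR_of_le (listTree.label_cons_le_label_cons hle.1 hh)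
  (hR.resolve_left (List.cons_ne_nil _ _)).2.box_ann_mem ht

theorem exists_lt_mem_canonAct (hσ : σ ≠ [])
    (ht : ∀ h ∈ (listTree (MCS CS)).H σ, t ∈ canonAct σ h) :
    ∃ τ h, (listTree (MCS CS)).lt τ σ ∧ h ∈ (listTree (MCS CS)).H σ ∧ t ∈ canonAct τ h := by
  have hbox := (forall_mem_canonAct_iff hσ).1 ht
  obtain ⟨d, τ, rfl⟩ := List.exists_cons_of_ne_nil hσ
  obtain ⟨h, hh⟩ := (listTree (MCS CS)).nonempty_H (d :: τ)
  refine ⟨τ, h, listTree.lt_cons d τ, hh, ?_⟩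
  rwa [mem_canonAct, listTree.label_eq hh]

theorem forall_mem_canonAct_of_canonR (hσ : σ ≠ []) (hR : canonR σ τ)
    (ht : ∀ h ∈ (listTree (MCS CS)).H σ, t ∈ canonAct σ h) :
    ∀ h ∈ (listTree (MCS CS)).H τ, t ∈ canonAct τ h := by
  obtain ⟨hτ, hacc⟩ := hR.resolve_left hσ
  exact (forall_mem_canonAct_iff hτ).2 (hacc.box_ann_mem ((forall_mem_canonAct_iff hσ).1 ht))

/-- The evidence function of the canonical model. The root is not required to verify `t:A`
itself, as its state is arbitrary. -/
def canonEv (σ : List (MCS CS)) (t : Pol PVar PConst) : Set (Form Ag PVar PConst PropVar) :=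
  {A | ∀ τ, canonR σ τ → τ ≠ [] → Form.proves t A ∈ momentState τ}

theorem proves_mem_historyState_iff (hσ : σ ≠ []) :
    Form.proves t A ∈ historyState σ h ↔ A ∈ canonEv σ t := by
  have hacc := acc_box_historyState σ h
  constructor
  · exact fun hA τ hR _ => (hR.resolve_left hσ).2.proves_mem <|
      (isS5_box.acc_symm hacc).know_of_box.proves_mem hA
  · exact fun hA => hacc.know_of_box.proves_mem (hA σ (canonR_refl σ) hσ)

end CanonicalModel

open CanonicalModel in
/-- The canonical model, on the tree of finite sequences of maximal consistent sets. -/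
noncomputable def canonicalModel {Ag PVar PConst PropVar : Type} [Inhabited PropVar]
    {CS : Set (Form Ag PVar PConst PropVar)} [Nonempty (MCS CS)] (hCS : IsConstSpec CS) :
    JstitModel (List (MCS CS)) Ag PVar PConst PropVar where
  toStitFrame := canonStitFrame CS
  R := canonR
  Re := canonR
  R_refl := canonR_refl
  R_trans := canonR_trans
  Re_refl := canonR_refl
  Re_trans := canonR_trans
  R_sub_Re hR := hR
  le_sub_R hle := canonR_of_le hle
  act := canonAct
  ev := canonEv
  val p := {x | Form.pv p ∈ historyState x.1 x.2}
  ev_mono _ _ _ hR _ hA τ hτ hne := hA τ (canonR_trans hR hτ) hne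
  ev_app _ _ _ _ _ hAB hA τ hτ hne :=
    MCS.mem_imp.1 (MCS.mem_of_ax .a4 (hAB τ hτ hne)) (hA τ hτ hne)
  ev_sum_left _ _ _ _ hA τ hτ hne := MCS.mem_of_ax .a6 (MCS.mem_or.2 (.inl (hA τ hτ hne)))
  ev_sum_right _ _ _ _ hA τ hτ hne := MCS.mem_of_ax .a6 (MCS.mem_or.2 (.inr (hA τ hτ hne)))
  ev_bang _ _ _ hA τ hτ hne := (MCS.mem_and.1 (MCS.mem_of_ax .a5 (hA τ hτ hne))).1
  expansion _ _ _ hlt hh := canonAct_subset hlt hh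
  no_new σ _ ht := by
    rcases eq_or_ne σ [] with rfl | hσ
    · exact absurd ht (not_forall_mem_canonAct_nil hCS)
    · exact exists_lt_mem_canonAct hσ ht
  divide _ _ _ hh hg hu := by
    rw [canonAct, canonAct, listTree.label_eq_of_undiv hu hh hg]
  transparent σ _ _ hR ht := by
    rcases eq_or_ne σ [] with rfl | hσ
    · exact absurd ht (not_forall_mem_canonAct_nil hCS)
    · exact forall_mem_canonAct_of_canonR hσ hR ht

namespace CanonicalModel

variable {Ag PVar PConst PropVar : Type} [Inhabited PropVar]
  {CS : Set (Form Ag PVar PConst PropVar)} [Nonempty (MCS CS)]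

theorem sat_iff (hCS : IsConstSpec CS) {A : Form Ag PVar PConst PropVar} {σ : List (MCS CS)}
    {h : Set (List (MCS CS))} (hσ : σ ≠ []) (hh : h ∈ (listTree (MCS CS)).H σ) :
    (canonicalModel hCS).Sat A σ h ↔ A ∈ historyState σ h := by
  induction A generalizing σ h with
  | pv p => exact Iff.rfl
  | and A B ihA ihB => rw [JstitModel.Sat, ihA hσ hh, ihB hσ hh, MCS.mem_and]
  | neg A ih => rw [JstitModel.Sat, ih hσ hh, MCS.mem_neg]
  | stit j A ih =>
    rw [JstitModel.sat_stit, stit_mem_historyState_iff hh]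
    exact forall₂_congr fun _ hg => ih hσ hg.mem_H
  | box A ih =>
    rw [JstitModel.Sat, box_mem_historyState_iff]
    exact forall₂_congr fun _ hg => ih hσ hg
  | proves t A ih =>
    have hsat : ∀ τ g, canonR σ τ → g ∈ (listTree (MCS CS)).H τ →
        ((canonicalModel hCS).Sat A τ g ↔ A ∈ historyState τ g) :=
      fun τ g hR hg => ih (hR.resolve_left hσ).1 hg
    rw [JstitModel.Sat, proves_mem_historyState_iff hσ]
    refine and_iff_left_of_imp fun hA τ g hR hg => (hsat τ g hR hg).2 ?_
    have hprov := (proves_mem_historyState_iff (h := h) hσ).2 hA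
    exact know_mem_historyState hσ hR (MCS.mem_and.1 (MCS.mem_of_ax .a5 hprov)).2 g
  | know A ih =>
    rw [JstitModel.Sat, know_mem_historyState_iff hσ]
    exact forall₄_congr fun _ _ hR hg => ih (hR.resolve_left hσ).1 hg
  | ann t => exact mem_canonAct_iff_ann_mem hσ

end CanonicalModel

section Main

variable {Ag PVar PConst PropVar : Type} [Inhabited PropVar]
  {CS Γ : Set (Form Ag PVar PConst PropVar)}

theorem CSConsistent.exists_model (hCS : IsConstSpec CS) (hΓ : CSConsistent CS Γ) :
    ∃ (Mo : Type) (M : JstitModel Mo Ag PVar PConst PropVar),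
      M.toTemporalFrame.MixSucc ∧ M.toJstitFrame.Unirelational ∧ CSNormal CS M ∧
      ∃ m h, h ∈ M.toTemporalFrame.H m ∧ ∀ A ∈ Γ, M.Sat A m h := by
  have : Nonempty (MCS CS) := (exists_mcs_forall_box_ann_notMem hCS).nonempty
  obtain ⟨X, hX⟩ := MCS.csConsistent_iff.1 hΓ
  obtain ⟨h, hh, hhX⟩ := CanonicalModel.exists_historyState_eq (σ := [X]) (.refl X)
  exact ⟨_, canonicalModel hCS, listTree.mixSucc, fun _ _ hR => hR,
    fun c _ A hA τ _ _ => MCS.mem_of_proves (.rcs hA), _, h, hh,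
    fun A hA => (CanonicalModel.sat_iff hCS (List.cons_ne_nil _ _) hh).2 (hhX.symm ▸ hX hA)⟩

theorem stmt7_general (hCS : IsConstSpec CS) :
    (CSConsistent CS Γ ↔
      ∃ (Mo : Type) (M : JstitModel Mo Ag PVar PConst PropVar),
        M.toTemporalFrame.MixSucc ∧ CSNormal CS M ∧
        ∃ m h, h ∈ M.toTemporalFrame.H m ∧ ∀ A ∈ Γ, M.Sat A m h) ∧
    (CSConsistent CS Γ ↔
      ∃ (Mo : Type) (M : JstitModel Mo Ag PVar PConst PropVar),
        M.toTemporalFrame.MixSucc ∧ M.toJstitFrame.Unirelational ∧ CSNormal CS M ∧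
        ∃ m h, h ∈ M.toTemporalFrame.H m ∧ ∀ A ∈ Γ, M.Sat A m h) := by
  refine ⟨⟨fun hΓ => ?_, ?_⟩, ⟨CSConsistent.exists_model hCS, ?_⟩⟩
  · obtain ⟨Mo, M, hmix, -, hN, hsat⟩ := hΓ.exists_model hCS
    exact ⟨Mo, M, hmix, hN, hsat⟩
  · rintro ⟨Mo, M, hmix, hN, m, h, hh, hΓ⟩
    exact .of_sat hCS hN hmix hh hΓ
  · rintro ⟨Mo, M, hmix, -, hN, m, h, hh, hΓ⟩
    exact .of_sat hCS hN hmix hh hΓ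

end Main

/-- Theorem 1: Γ is CS-consistent iff it is satisfiable in the class of
CS-normal jstit models based on mixed successor stit frames for Ag, iff it is
satisfiable in the subclass of unirelational such models. -/
theorem stmt7 {Ag PVar PConst PropVar : Type} [Finite Ag]
    [Countable PVar] [Infinite PVar] [Countable PConst] [Infinite PConst]
    [Countable PropVar] [Infinite PropVar] [Inhabited PropVar]
    (CS : Set (Form Ag PVar PConst PropVar)) (hCS : IsConstSpec CS)
    (Γ : Set (Form Ag PVar PConst PropVar)) :
    (CSConsistent CS Γ ↔
      ∃ (Mo : Type) (M : JstitModel Mo Ag PVar PConst PropVar),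
        M.toTemporalFrame.MixSucc ∧ CSNormal CS M ∧
        ∃ m h, h ∈ M.toTemporalFrame.H m ∧ ∀ A ∈ Γ, M.Sat A m h) ∧
    (CSConsistent CS Γ ↔
      ∃ (Mo : Type) (M : JstitModel Mo Ag PVar PConst PropVar),
        M.toTemporalFrame.MixSucc ∧ M.toJstitFrame.Unirelational ∧ CSNormal CS M ∧
        ∃ m h, h ∈ M.toTemporalFrame.H m ∧ ∀ A ∈ Γ, M.Sat A m h) := by
  exact stmt7_general hCS
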